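/- Let p be a prime, n ≥ 2 an integer, δ ∈ {1,2} with δ ≤ n, and q = p^n. Then the number of q-tuples (β_0, β_1, …, β_{q−1}) of permutations of {0,…,p^n−1} such that β_i β_j^{−1} has no fixed point for all i ≠ j and the set {β_0, …, β_{q−1}} is a subgroup of S_q isomorphic to Z_{p^δ} × Z_p × ⋯ × Z_p (with n−δ factors Z_p) equals p^n! · (p^n − 1)! / ( (p^n − p^{(δ−1)(n−δ+1)}) · Π_{i=1}^{n−δ} (p^{n−δ+1} − p^i) ). -/

import Mathlib

/-!
A permutation group tuple with group `G` is an enumeration `σ : ι ≃ G` followed by a semiregular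
action `ψ` of `G`, and the pairs `(σ, ψ)` giving the same tuple form a single free orbit of
`Aut G`. When `|G| = |Ω| = q`, a semiregular action with a base point is the same as a bijection
`G ≃ Ω`, so there are `q! / q` semiregular actions. Hence `|tuples| * |Aut G| = q! * (q - 1)!`.

For `G = Z_{p ^ (d + 1)} × Z_p ^ m` an endomorphism is given by the images `x, y₀, …, y_{m-1}` of
the standard generators. A homomorphism of `p`-groups is injective as soon as it is so on
`p`-torsion, which means that `p ^ d • x, y₀, …, y_{m-1}` are linearly independent over `F_p`.
Choosing `x` first and then the `yᵢ` one at a time gives `|Aut G|`.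
-/

section PermutationTuples

open Equiv (Perm)

variable {G ι Ω : Type*} [Group G]

/-- A permutation polynomial tuple: the graphs of its entries are pairwise disjoint. The indices and
the points are arbitrary types instead of `{0, …, q - 1}`. -/
def IsPermPolyTuple (β : ι → Perm Ω) : Prop :=
  ∀ i j, i ≠ j → ∀ x, (β i * (β j)⁻¹) x ≠ x

variable (G) in
/-- The tuple of a permutation group polynomial: a permutation polynomial tuple whose entries form
a group isomorphic to `G`. -/
def IsPermGroupTuple (β : ι → Perm Ω) : Prop :=
  IsPermPolyTuple β ∧
    ∃ H : Subgroup (Perm Ω), (H : Set (Perm Ω)) = Set.range β ∧ Nonempty (H ≃* G)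

/-- A permutation representation is semiregular if only the identity has a fixed point. -/
def IsSemiregular (ψ : G →* Perm Ω) : Prop :=
  ∀ g x, ψ g x = x → g = 1

lemma IsPermPolyTuple.injective [Nonempty Ω] {β : ι → Perm Ω} (hβ : IsPermPolyTuple β) :
    Function.Injective β := by
  intro i j hij
  by_contra hne
  exact hβ i j hne (Classical.arbitrary Ω) (by simp [hij])

lemma IsSemiregular.apply_left_injective {ψ : G →* Perm Ω} (hψ : IsSemiregular ψ) (x : Ω) :
    Function.Injective fun g ↦ ψ g x := by
  intro g h (hgh : ψ g x = ψ h x)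
  have hfix : ψ (h⁻¹ * g) x = x := by simp [hgh]
  exact (inv_mul_eq_one.mp (hψ _ _ hfix)).symm

lemma IsSemiregular.injective [Nonempty Ω] {ψ : G →* Perm Ω} (hψ : IsSemiregular ψ) :
    Function.Injective ψ := fun _ _ hgh ↦
  hψ.apply_left_injective (Classical.arbitrary Ω) (DFunLike.congr_fun hgh _)

lemma IsSemiregular.comp_mulAut {ψ : G →* Perm Ω} (hψ : IsSemiregular ψ) (α : MulAut G) :
    IsSemiregular (ψ.comp α.toMonoidHom) := fun g x hx ↦ by
  simpa using hψ _ x hx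

/-- When `|G| = |Ω|`, a semiregular action of `G` on `Ω` together with a base point `x` is the same
as a bijection `G ≃ Ω`, namely `g ↦ g • x`; the action is recovered by transporting left
multiplication along it. -/
noncomputable def semiregularProdEquiv [Finite Ω] (hcard : Nat.card G = Nat.card Ω) :
    {ψ : G →* Perm Ω // IsSemiregular ψ} × Ω ≃ (G ≃ Ω) where
  toFun P := Equiv.ofBijective (fun g ↦ P.1.1 g P.2)
    ((P.1.2.apply_left_injective P.2).bijective_of_nat_card_le hcard.ge)
  invFun τ := (⟨τ.permCongrHom.toMonoidHom.comp (MulAction.toPermHom G G), fun g x hx ↦ by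
    simpa [← Equiv.eq_symm_apply] using hx⟩, τ 1)
  left_inv := by
    rintro ⟨⟨ψ, hψ⟩, x⟩
    let τ := Equiv.ofBijective (fun g ↦ ψ g x)
      ((hψ.apply_left_injective x).bijective_of_nat_card_le hcard.ge)
    have hτ_apply (g : G) : τ g = ψ g x := rfl
    refine Prod.ext (Subtype.ext (MonoidHom.ext fun g ↦ Equiv.ext fun z ↦ ?_)) (by simp)
    obtain ⟨h, rfl⟩ := τ.surjective z
    change τ (g * τ.symm (τ h)) = ψ g (τ h)
    rw [τ.symm_apply_apply]
    simp [hτ_apply]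
  right_inv τ := by ext; simp

lemma natCard_equiv_of_natCard_eq {α β : Type*} [Finite α] [Finite β]
    (h : Nat.card α = Nat.card β) :
    Nat.card (α ≃ β) = (Nat.card α).factorial := by
  obtain ⟨e⟩ := Finite.card_eq.mp h
  rw [Nat.card_congr (Equiv.equivCongr (Equiv.refl α) e.symm), Nat.card_perm]

lemma natCard_semiregular [Finite Ω] [Nonempty Ω] (hcard : Nat.card G = Nat.card Ω) :
    Nat.card {ψ : G →* Perm Ω // IsSemiregular ψ} = (Nat.card Ω - 1).factorial := by
  have : Finite G := Nat.finite_of_card_ne_zero (hcard ▸ Nat.card_pos.ne')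
  refine Nat.eq_of_mul_eq_mul_right (Nat.card_pos (α := Ω)) ?_
  rw [← Nat.card_prod, Nat.card_congr (semiregularProdEquiv hcard),
    natCard_equiv_of_natCard_eq hcard, hcard, mul_comm, Nat.mul_factorial_pred Nat.card_pos.ne']

lemma IsSemiregular.isPermGroupTuple [Nonempty Ω] {ψ : G →* Perm Ω} (hψ : IsSemiregular ψ)
    (σ : ι ≃ G) : IsPermGroupTuple G (ψ ∘ σ) := by
  refine ⟨fun i j hij x hx ↦ hij ?_, ψ.range, ?_, ⟨(ψ.ofInjective hψ.injective).symm⟩⟩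
  · have hone : σ i * (σ j)⁻¹ = 1 := hψ _ x (by simpa using hx)
    exact σ.injective (mul_inv_eq_one.mp hone)
  · rw [MonoidHom.coe_range, σ.surjective.range_comp]

lemma IsPermGroupTuple.exists_comp_eq [Nonempty Ω] {β : ι → Perm Ω} (hβ : IsPermGroupTuple G β) :
    ∃ (σ : ι ≃ G) (ψ : G →* Perm Ω), IsSemiregular ψ ∧ ψ ∘ σ = β := by
  obtain ⟨hdisj, H, hH, ⟨e⟩⟩ := hβ
  let enum : ι ≃ H := (Equiv.ofInjective β hdisj.injective).trans (Equiv.setCongr hH.symm)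
  let ψ : G →* Perm Ω := H.subtype.comp e.symm.toMonoidHom
  have hψβ (i : ι) : ψ (e (enum i)) = β i :=
    congrArg Subtype.val (e.symm_apply_apply (enum i))
  refine ⟨enum.trans e.toEquiv, ψ, fun g x hx ↦ ?_, funext hψβ⟩
  obtain ⟨i, rfl⟩ := (enum.trans e.toEquiv).surjective g
  obtain ⟨j, hj⟩ := (enum.trans e.toEquiv).surjective 1
  have hβj : β j = 1 := by rw [← hψβ, ← ψ.map_one]; exact congrArg ψ hj
  rw [← hj]
  congr
  by_contra hij
  exact hdisj i j hij x (by simpa [hβj, ← hψβ] using hx)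

/-- The ways to write a tuple as a semiregular action of `G` evaluated along an enumeration of
`G`. -/
abbrev Parametrization (β : ι → Perm Ω) (G : Type*) [Group G] : Type _ :=
  {P : (ι ≃ G) × {ψ : G →* Perm Ω // IsSemiregular ψ} // P.2.1 ∘ P.1 = β}

/-- The action of an automorphism `α` of `G` on a parametrization: `α` is inserted after the
enumeration and cancelled by `α⁻¹` before the action. -/
def Parametrization.twist {β : ι → Perm Ω} (P : Parametrization β G) (α : MulAut G) :
    Parametrization β G :=
  ⟨(P.1.1.trans α.toEquiv, ⟨P.1.2.1.comp α.symm.toMonoidHom, P.1.2.2.comp_mulAut α.symm⟩), by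
    refine Eq.trans (funext fun i ↦ ?_) P.2
    simp⟩

lemma Parametrization.twist_bijective [Nonempty Ω] {β : ι → Perm Ω} (P : Parametrization β G) :
    Function.Bijective P.twist := by
  obtain ⟨⟨σ, ψ, hψ⟩, rfl⟩ := P
  constructor
  · intro α α' h
    have hσ : σ.trans α.toEquiv = σ.trans α'.toEquiv := congrArg (·.1.1) h
    ext g
    simpa using DFunLike.congr_fun hσ (σ.symm g)
  · rintro ⟨⟨σ', ψ', hψ'⟩, hcomp : ψ' ∘ σ' = ψ ∘ σ⟩
    have hrange : ψ.range = ψ'.range := SetLike.coe_injective <| by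
      simpa only [MonoidHom.coe_range, EquivLike.range_comp] using (congrArg Set.range hcomp).symm
    let α : MulAut G := (ψ.ofInjective hψ.injective).trans
      ((MulEquiv.subgroupCongr hrange).trans (ψ'.ofInjective hψ'.injective).symm)
    have hα (g : G) : ψ' (α g) = ψ g :=
      MonoidHom.apply_ofInjective_symm hψ'.injective _
    refine ⟨α, Subtype.ext (Prod.ext (Equiv.ext fun i ↦ hψ'.injective ?_)
      (Subtype.ext (MonoidHom.ext fun g ↦ ?_)))⟩
    · exact (hα (σ i)).trans (congrFun hcomp i).symm
    · exact (hα (α.symm g)).symm.trans (by simp)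

lemma natCard_permGroupTuple_mul_eq_natCard_equiv_mul [Nonempty Ω] :
    Nat.card {β : ι → Perm Ω // IsPermGroupTuple G β} * Nat.card (MulAut G) =
      Nat.card (ι ≃ G) * Nat.card {ψ : G →* Perm Ω // IsSemiregular ψ} := by
  have nonempty_fiber (β : {β : ι → Perm Ω // IsPermGroupTuple G β}) :
      Nonempty (Parametrization β.1 G) :=
    let ⟨σ, ψ, hψ, h⟩ := β.2.exists_comp_eq
    ⟨⟨(σ, ⟨ψ, hψ⟩), h⟩⟩
  let eval (P : (ι ≃ G) × {ψ : G →* Perm Ω // IsSemiregular ψ}) :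
      {β : ι → Perm Ω // IsPermGroupTuple G β} := ⟨P.2.1 ∘ P.1, P.2.2.isPermGroupTuple P.1⟩
  rw [← Nat.card_prod, ← Nat.card_prod, ← Nat.card_congr (Equiv.sigmaEquivProd _ _),
    ← Nat.card_congr (Equiv.sigmaFiberEquiv eval)]
  refine Nat.card_congr (Equiv.sigmaCongrRight fun β ↦ ?_)
  exact (Equiv.ofBijective _ (nonempty_fiber β).some.twist_bijective).trans
    (Equiv.subtypeEquivRight fun P ↦ (Subtype.ext_iff (a1 := eval P)).symm)

theorem natCard_permGroupTuple_mul_natCard_mulAut [Finite Ω] [Nonempty Ω]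
    (hι : Nat.card ι = Nat.card Ω) (hG : Nat.card G = Nat.card Ω) :
    Nat.card {β : ι → Perm Ω // IsPermGroupTuple G β} * Nat.card (MulAut G) =
      (Nat.card Ω).factorial * (Nat.card Ω - 1).factorial := by
  have : Finite G := Nat.finite_of_card_ne_zero (hG ▸ Nat.card_pos.ne')
  have : Finite ι := Nat.finite_of_card_ne_zero (hι ▸ Nat.card_pos.ne')
  rw [natCard_permGroupTuple_mul_eq_natCard_equiv_mul, natCard_semiregular hG,
    natCard_equiv_of_natCard_eq (hι.trans hG.symm), hι]

lemma isPermGroupTuple_multiplicative_iff {A : Type*} [AddGroup A] {β : ι → Perm Ω} :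
    IsPermGroupTuple (Multiplicative A) β ↔
      (∀ i j, i ≠ j → ∀ x, (β i * (β j)⁻¹) x ≠ x) ∧
        ∃ H : Subgroup (Perm Ω), (H : Set (Perm Ω)) = Set.range β ∧
          Nonempty (Additive H ≃+ A) :=
  and_congr_right fun _ ↦ exists_congr fun _ ↦ and_congr_right fun _ ↦
    MulEquiv.toAdditiveLeft.nonempty_congr

theorem natCard_permGroupTuple_mul_natCard_addAut {A : Type*} [AddGroup A] [Finite Ω] [Nonempty Ω]
    (hι : Nat.card ι = Nat.card Ω) (hA : Nat.card A = Nat.card Ω) :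
    Nat.card {β : ι → Perm Ω // IsPermGroupTuple (Multiplicative A) β} * Nat.card (AddAut A) =
      (Nat.card Ω).factorial * (Nat.card Ω - 1).factorial := by
  rw [Nat.card_congr (AddEquiv.toMultiplicative (G := A) (H := A))]
  exact natCard_permGroupTuple_mul_natCard_mulAut hι
    ((Nat.card_congr Multiplicative.toAdd).trans hA)

end PermutationTuples

section LinearAlgebra

open Module (Basis)

variable {K V W : Type*} [Field K] [AddCommGroup V] [Module K V] [AddCommGroup W] [Module K W]

lemma injective_iff_linearIndependent_comp_basis {κ : Type*} (b : Basis κ K V) (f : V →ₗ[K] W) :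
    Function.Injective f ↔ LinearIndependent K (f ∘ b) := by
  rw [linearIndependent_iff_injective_finsuppLinearCombination,
    Finsupp.linearCombination_linear_comp, LinearMap.coe_comp, ← b.coe_repr_symm]
  exact (EquivLike.injective_comp b.repr.symm f).symm

lemma linearIndependent_cons_snoc {k : ℕ} {v z : V} {y : Fin k → V} :
    LinearIndependent K (Fin.cons v (Fin.snoc y z : Fin (k + 1) → V) : Fin (k + 1 + 1) → V) ↔
      LinearIndependent K (Fin.cons v y : Fin (k + 1) → V) ∧
        z ∉ Submodule.span K (Set.range (Fin.cons v y : Fin (k + 1) → V)) := by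
  rw [Fin.cons_snoc_eq_snoc_cons, linearIndependent_finSnoc]

variable (K) in
/-- A linearly independent `(v, y₀, …, y_k)` is a linearly independent `(v, y₀, …, y_{k-1})`
together with a vector outside its span. -/
def linearIndependentConsSuccEquiv (v : V) (k : ℕ) :
    {y : Fin (k + 1) → V // LinearIndependent K (Fin.cons v y : Fin (k + 1 + 1) → V)} ≃
      Σ y : {y : Fin k → V // LinearIndependent K (Fin.cons v y : Fin (k + 1) → V)},
        {z : V // z ∉ Submodule.span K (Set.range (Fin.cons v y.1 : Fin (k + 1) → V))} where
  toFun y :=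
    have hy := linearIndependent_cons_snoc.mp ((Fin.snoc_init_self y.1).symm ▸ y.2)
    ⟨⟨Fin.init y.1, hy.1⟩, ⟨y.1 (Fin.last k), hy.2⟩⟩
  invFun P := ⟨Fin.snoc P.1.1 P.2.1, linearIndependent_cons_snoc.mpr ⟨P.1.2, P.2.2⟩⟩
  left_inv y := by simp
  right_inv := by
    rintro ⟨⟨y, hy⟩, ⟨z, hz⟩⟩
    exact Sigma.subtype_ext (Subtype.ext (by simp)) (by simp)

lemma natCard_compl_span [Finite V] {ι : Type*} [Fintype ι] {s : ι → V}
    (hs : LinearIndependent K s) :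
    Nat.card {z : V // z ∉ Submodule.span K (Set.range s)} =
      Nat.card V - Nat.card K ^ Fintype.card ι := by
  rw [← finrank_span_eq_card hs, ← Module.natCard_eq_pow_finrank]
  have := Fintype.ofFinite V
  classical
  simp only [Nat.card_eq_fintype_card]
  exact Fintype.card_subtype_compl _

lemma natCard_linearIndependent_cons [Finite V] {v : V} (hv : v ≠ 0) (k : ℕ) :
    Nat.card {y : Fin k → V // LinearIndependent K (Fin.cons v y : Fin (k + 1) → V)} =
      ∏ i ∈ Finset.Icc 1 k, (Nat.card V - Nat.card K ^ i) := by
  induction k with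
  | zero =>
    have hli : LinearIndependent K (Fin.cons v Fin.elim0 : Fin 1 → V) :=
      (linearIndependent_unique_iff (ι := Fin 1)).mpr hv
    rw [Nat.card_eq_one_iff_unique.mpr ⟨inferInstance, ⟨⟨_, hli⟩⟩⟩]
    simp
  | succ k ih =>
    have := Fintype.ofFinite {y : Fin k → V // LinearIndependent K (Fin.cons v y : Fin (k + 1) → V)}
    have hfiber (y : {y : Fin k → V // LinearIndependent K (Fin.cons v y : Fin (k + 1) → V)}) :
        Nat.card {z : V // z ∉ Submodule.span K (Set.range (Fin.cons v y.1 : Fin (k + 1) → V))} =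
          Nat.card V - Nat.card K ^ (k + 1) := by
      rw [natCard_compl_span y.2, Fintype.card_fin]
    rw [Nat.card_congr (linearIndependentConsSuccEquiv K v k), Nat.card_sigma,
      Finset.sum_congr rfl fun y _ ↦ hfiber y, Finset.sum_const, Finset.card_univ,
      ← Nat.card_eq_fintype_card, ih, Finset.prod_Icc_succ_top (by lia), smul_eq_mul]

end LinearAlgebra

section Torsion

open AddSubgroup (torsionBy)
open Module (finrank)

attribute [local instance] AddSubgroup.torsionBy.zmodModule

variable {A B : Type*} [AddCommGroup A] [AddCommGroup B]

/-- A homomorphism out of a `ZMod N`-module takes values in the `N`-torsion, and is `ZMod N`-linear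
as a map into it. -/
def zmodHomEquiv (N : ℕ) (M B : Type*) [AddCommGroup M] [Module (ZMod N) M] [AddCommGroup B] :
    (M →+ B) ≃ (M →ₗ[ZMod N] torsionBy B N) where
  toFun f := (f.codRestrict (torsionBy B N) fun a ↦ by
    rw [AddSubgroup.torsionBy.nsmul_iff, ← map_nsmul, ← Nat.cast_smul_eq_nsmul (ZMod N)]
    simp).toZModLinearMap N
  invFun g := (torsionBy B N).subtype.comp g.toAddMonoidHom
  left_inv _ := rfl
  right_inv _ := rfl

/-- The map induced by a group homomorphism on `N`-torsion. -/
def torsionByMap (N : ℕ) (f : A →+ B) : torsionBy A N →ₗ[ZMod N] torsionBy B N :=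
  zmodHomEquiv N (torsionBy A N) B (f.comp (torsionBy A N).subtype)

lemma injective_iff_injective_torsionByMap {p k : ℕ} (hA : ∀ a : A, p ^ k • a = 0) (f : A →+ B) :
    Function.Injective f ↔ Function.Injective (torsionByMap p f) := by
  rw [injective_iff_map_eq_zero f, injective_iff_map_eq_zero (torsionByMap p f)]
  refine ⟨fun h a ha ↦ Subtype.ext (h a (congrArg Subtype.val ha)), fun h ↦ ?_⟩
  have hker (j : ℕ) : ∀ a : A, p ^ j • a = 0 → f a = 0 → a = 0 := by
    induction j with
    | zero => simp
    | succ j ih =>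
      intro a ha hfa
      have hpa : p • a = 0 := ih (p • a) (by rwa [smul_smul, ← pow_succ]) (by simp [hfa])
      exact congrArg Subtype.val
        (h ⟨a, AddSubgroup.torsionBy.nsmul_iff.mpr hpa⟩ (Subtype.ext hfa))
  exact fun a ↦ hker k a (hA a)

/-- A homomorphism out of `ZMod N × ZMod p ^ ι` is determined by the images of the standard
generators, which can be any `N`-torsion element and any family of `p`-torsion elements. -/
noncomputable def zmodProdHomEquiv (N p : ℕ) (ι B : Type*) [Fintype ι] [DecidableEq ι]
    [AddCommGroup B] :
    (ZMod N × (ι → ZMod p) →+ B) ≃ torsionBy B N × (ι → torsionBy B p) where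
  toFun f := (zmodHomEquiv N (ZMod N) B (f.comp (.inl _ _)) 1,
    fun i ↦ zmodHomEquiv p (ι → ZMod p) B (f.comp (.inr _ _)) (Pi.single i 1))
  invFun P := ((zmodHomEquiv N (ZMod N) B).symm (LinearMap.toSpanSingleton _ _ P.1)).coprod
    ((zmodHomEquiv p (ι → ZMod p) B).symm (Fintype.linearCombination _ P.2))
  left_inv f := by
    have hinl : LinearMap.toSpanSingleton (ZMod N) _
        (zmodHomEquiv N (ZMod N) B (f.comp (.inl _ _)) 1) =
          zmodHomEquiv N (ZMod N) B (f.comp (.inl _ _)) := by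
      ext; simp
    have hinr : Fintype.linearCombination (ZMod p)
        (fun i ↦ zmodHomEquiv p (ι → ZMod p) B (f.comp (.inr _ _)) (Pi.single i 1)) =
          zmodHomEquiv p (ι → ZMod p) B (f.comp (.inr _ _)) := by
      ext; simp
    simp only [hinl, hinr, Equiv.symm_apply_apply, AddMonoidHom.coprod_unique]
  right_inv P := by
    ext <;> simp

lemma natCard_torsionBy_zmod (N e : ℕ) [NeZero N] : Nat.card (torsionBy (ZMod N) e) = N.gcd e := by
  have hker : torsionBy (ZMod N) e = (nsmulAddMonoidHom e : ZMod N →+ ZMod N).ker := by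
    ext a
    rw [AddSubgroup.torsionBy.nsmul_iff]; rfl
  rw [hker, IsAddCyclic.card_nsmulAddMonoidHom_ker, Nat.card_zmod]

lemma natCard_torsionBy_zmod_prod (N p e : ℕ) [NeZero N] [NeZero p] (ι : Type*) [Finite ι] :
    Nat.card (torsionBy (ZMod N × (ι → ZMod p)) e) = N.gcd e * p.gcd e ^ Nat.card ι := by
  rw [← natCard_torsionBy_zmod, ← natCard_torsionBy_zmod, ← Nat.card_fun, ← Nat.card_prod]
  have hmem (a : ZMod N × (ι → ZMod p)) : a ∈ torsionBy _ (e : ℤ) ↔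
      a.1 ∈ torsionBy (ZMod N) e ∧ ∀ i, a.2 i ∈ torsionBy (ZMod p) e := by
    simp only [AddSubgroup.torsionBy.nsmul_iff, Prod.ext_iff, funext_iff]
    rfl
  exact Nat.card_congr <| (Equiv.subtypeEquivRight hmem).trans <|
    (Equiv.subtypeProdEquivProd (p := (· ∈ torsionBy (ZMod N) (e : ℤ)))
      (q := fun f : ι → ZMod p ↦ ∀ i, f i ∈ torsionBy (ZMod p) (e : ℤ))).trans <|
    (Equiv.refl _).prodCongr Equiv.subtypePiEquivPi

/-- Multiplication by `p ^ d` as a map from the `p ^ (d + 1)`-torsion to the `p`-torsion. -/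
def torsionByPowSMul (p d : ℕ) (x : torsionBy B (p ^ (d + 1) : ℕ)) : torsionBy B p :=
  ⟨p ^ d • (x : B), by
    rw [AddSubgroup.torsionBy.nsmul_iff, smul_smul, ← pow_succ', ← AddSubgroup.torsionBy.nsmul_iff]
    exact x.2⟩

lemma torsionByPowSMul_eq_zero_iff {p d : ℕ} {x : torsionBy B (p ^ (d + 1) : ℕ)} :
    torsionByPowSMul p d x = 0 ↔ (x : B) ∈ torsionBy B (p ^ d : ℕ) := by
  rw [AddSubgroup.torsionBy.nsmul_iff, Subtype.ext_iff]
  rfl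

lemma natCard_torsionByPowSMul_ne_zero [Finite B] (p d : ℕ) :
    Nat.card {x : torsionBy B (p ^ (d + 1) : ℕ) // torsionByPowSMul p d x ≠ 0} =
      Nat.card (torsionBy B (p ^ (d + 1) : ℕ)) - Nat.card (torsionBy B (p ^ d : ℕ)) := by
  have hle : torsionBy B (p ^ d : ℕ) ≤ torsionBy B (p ^ (d + 1) : ℕ) := fun x hx ↦ by
    rw [AddSubgroup.torsionBy.nsmul_iff] at hx ⊢
    rw [pow_succ', mul_smul, hx, smul_zero]
  have hker : {x : torsionBy B (p ^ (d + 1) : ℕ) // torsionByPowSMul p d x = 0} ≃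
      torsionBy B (p ^ d : ℕ) :=
    (Equiv.subtypeEquivRight fun _ ↦ torsionByPowSMul_eq_zero_iff).trans
      (Equiv.subtypeSubtypeEquivSubtype (hle ·))
  have := Fintype.ofFinite B
  classical
  rw [← Nat.card_congr hker]
  simp only [Nat.card_eq_fintype_card]
  exact Fintype.card_subtype_compl _

variable {p d m : ℕ}

/-- The group `Z_{p ^ (d + 1)} × Z_p ^ m`; the exponent is shifted so that the first factor is
nontrivial. -/
abbrev CyclicProd (p d m : ℕ) : Type := ZMod (p ^ (d + 1)) × (Fin m → ZMod p)

lemma natCard_cyclicProd : Nat.card (CyclicProd p d m) = p ^ (m + (d + 1)) := by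
  rw [Nat.card_prod, Nat.card_fun, Nat.card_zmod, Nat.card_zmod, Nat.card_fin, ← pow_add, add_comm]

lemma CyclicProd.pow_smul_eq_zero (a : CyclicProd p d m) : p ^ (d + 1) • a = 0 := by
  refine Prod.ext ?_ (funext fun i ↦ ?_)
  · change p ^ (d + 1) • a.1 = 0
    rw [nsmul_eq_mul, ZMod.natCast_self, zero_mul]
  · simp [nsmul_eq_mul, pow_succ]

/-- The family `(p ^ d • x, y₀, …, y_{m-1})` in the `p`-torsion attached to the images `(x, y)`
of the standard generators of `CyclicProd p d m`. -/
def torsionByFamily (P : torsionBy B (p ^ (d + 1) : ℕ) × (Fin m → torsionBy B p)) :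
    Fin (m + 1) → torsionBy B p :=
  Fin.cons (torsionByPowSMul p d P.1) P.2

variable (p d m) in
/-- The family attached to the standard generators themselves; it is a basis of the `p`-torsion. -/
noncomputable def stdFamily : Fin (m + 1) → torsionBy (CyclicProd p d m) p :=
  torsionByFamily (zmodProdHomEquiv _ _ _ _ (AddMonoidHom.id _))

lemma torsionByMap_comp_stdFamily (f : CyclicProd p d m →+ B) :
    torsionByMap p f ∘ stdFamily p d m = torsionByFamily (zmodProdHomEquiv _ _ _ _ f) := by
  funext i
  refine Fin.cases (Subtype.ext ?_) (fun i ↦ rfl) i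
  exact map_nsmul f _ _

lemma linearIndependent_stdFamily [Fact p.Prime] :
    LinearIndependent (ZMod p) (stdFamily p d m) := by
  let gens := zmodProdHomEquiv _ _ _ _ (AddMonoidHom.id (CyclicProd p d m))
  refine linearIndependent_finCons.mpr ⟨?_, fun hmem ↦ ?_⟩
  · let snd : torsionBy (CyclicProd p d m) p →ₗ[ZMod p] Fin m → ZMod p :=
      ((AddMonoidHom.snd _ _).comp (torsionBy _ _).subtype).toZModLinearMap p
    have hsnd : snd ∘ gens.2 = Pi.basisFun (ZMod p) (Fin m) := by
      funext i
      rw [Pi.basisFun_apply]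
      rfl
    exact .of_comp snd (hsnd ▸ (Pi.basisFun (ZMod p) (Fin m)).linearIndependent)
  · let fst := torsionByMap p (AddMonoidHom.fst (ZMod (p ^ (d + 1))) (Fin m → ZMod p))
    have hle : Submodule.span (ZMod p) (Set.range gens.2) ≤ LinearMap.ker fst := by
      rw [Submodule.span_le]
      rintro _ ⟨i, rfl⟩
      rfl
    have hpow : p ^ d • (1 : ZMod (p ^ (d + 1))) = 0 := congrArg Subtype.val (hle hmem)
    rw [nsmul_one, ZMod.natCast_eq_zero_iff,
      Nat.pow_dvd_pow_iff_le_right (Fact.out : p.Prime).one_lt] at hpow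
    lia

lemma natCard_torsionBy_cyclicProd [NeZero p] :
    Nat.card (torsionBy (CyclicProd p d m) p) = p ^ (m + 1) := by
  rw [natCard_torsionBy_zmod_prod, Nat.gcd_self, Nat.gcd_eq_right (dvd_pow_self p d.succ_ne_zero),
    Nat.card_fin, pow_succ']

lemma injective_iff_linearIndependent_torsionByFamily [Fact p.Prime] (f : CyclicProd p d m →+ B) :
    Function.Injective f ↔
      LinearIndependent (ZMod p) (torsionByFamily (zmodProdHomEquiv _ _ _ _ f)) := by
  have hfinrank :
      Fintype.card (Fin (m + 1)) = finrank (ZMod p) (torsionBy (CyclicProd p d m) p) := by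
    refine Nat.pow_right_injective (Fact.out : p.Prime).two_le ?_
    simp only [Fintype.card_fin]
    rw [← natCard_torsionBy_cyclicProd (d := d),
      Module.natCard_eq_pow_finrank (K := ZMod p), Nat.card_zmod]
  rw [injective_iff_injective_torsionByMap CyclicProd.pow_smul_eq_zero,
    injective_iff_linearIndependent_comp_basis
      (basisOfLinearIndependentOfCardEqFinrank linearIndependent_stdFamily hfinrank),
    coe_basisOfLinearIndependentOfCardEqFinrank, torsionByMap_comp_stdFamily]

lemma natCard_injective_hom [Fact p.Prime] [Finite B] :
    Nat.card {f : CyclicProd p d m →+ B // Function.Injective f} =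
      (Nat.card (torsionBy B (p ^ (d + 1) : ℕ)) - Nat.card (torsionBy B (p ^ d : ℕ))) *
        ∏ i ∈ Finset.Icc 1 m, (Nat.card (torsionBy B p) - p ^ i) := by
  let toPairs : {f : CyclicProd p d m →+ B // Function.Injective f} ≃
      {P : torsionBy B (p ^ (d + 1) : ℕ) × (Fin m → torsionBy B p) //
        LinearIndependent (ZMod p) (torsionByFamily P)} :=
    (zmodProdHomEquiv _ _ _ _).subtypeEquiv injective_iff_linearIndependent_torsionByFamily
  let fibered : {P : torsionBy B (p ^ (d + 1) : ℕ) × (Fin m → torsionBy B p) //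
        LinearIndependent (ZMod p) (torsionByFamily P)} ≃
      Σ x : {x : torsionBy B (p ^ (d + 1) : ℕ) // torsionByPowSMul p d x ≠ 0},
        {y : Fin m → torsionBy B p // LinearIndependent (ZMod p) (torsionByFamily (x.1, y))} :=
    { toFun P := ⟨⟨P.1.1, P.2.ne_zero 0⟩, ⟨P.1.2, P.2⟩⟩
      invFun S := ⟨(S.1.1, S.2.1), S.2.2⟩ }
  have hfiber (x : {x : torsionBy B (p ^ (d + 1) : ℕ) // torsionByPowSMul p d x ≠ 0}) :
      Nat.card {y : Fin m → torsionBy B p //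
        LinearIndependent (ZMod p) (torsionByFamily (x.1, y))} =
          ∏ i ∈ Finset.Icc 1 m, (Nat.card (torsionBy B p) - p ^ i) :=
    (natCard_linearIndependent_cons (K := ZMod p) x.2 m).trans (by rw [Nat.card_zmod])
  have := Fintype.ofFinite {x : torsionBy B (p ^ (d + 1) : ℕ) // torsionByPowSMul p d x ≠ 0}
  rw [Nat.card_congr (toPairs.trans fibered), Nat.card_sigma,
    Finset.sum_congr rfl fun x _ ↦ hfiber x, Finset.sum_const, Finset.card_univ,
    ← Nat.card_eq_fintype_card, natCard_torsionByPowSMul_ne_zero, smul_eq_mul]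

/-- The automorphisms of a finite group are its injective endomorphisms. -/
noncomputable def addAutEquivInjective (A : Type*) [AddGroup A] [Finite A] :
    AddAut A ≃ {f : A →+ A // Function.Injective f} where
  toFun e := ⟨e.toAddMonoidHom, e.injective⟩
  invFun f := AddEquiv.ofBijective f.1 (Finite.injective_iff_bijective.mp f.2)
  left_inv _ := by ext; rfl
  right_inv _ := by ext; rfl

lemma natCard_torsionBy_pow_cyclicProd [Fact p.Prime] :
    Nat.card (torsionBy (CyclicProd p d m) (p ^ d : ℕ)) = if d = 0 then 1 else p ^ (m + d) := by
  rw [natCard_torsionBy_zmod_prod, Nat.gcd_eq_right (pow_dvd_pow p d.le_succ), Nat.card_fin]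
  split_ifs with hd
  · simp [hd]
  · rw [Nat.gcd_eq_left (dvd_pow_self p hd), add_comm m d, pow_add]

lemma natCard_torsionBy_pow_succ_cyclicProd [NeZero p] :
    Nat.card (torsionBy (CyclicProd p d m) (p ^ (d + 1) : ℕ)) = p ^ (m + d + 1) := by
  rw [natCard_torsionBy_zmod_prod, Nat.gcd_self, Nat.gcd_eq_left (dvd_pow_self p d.succ_ne_zero),
    Nat.card_fin, ← pow_add, add_comm (d + 1) m, add_assoc]

lemma natCard_addAut_cyclicProd [Fact p.Prime] :
    Nat.card (AddAut (CyclicProd p d m)) =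
      (p ^ (m + d + 1) - if d = 0 then 1 else p ^ (m + d)) *
        ∏ i ∈ Finset.Icc 1 m, (p ^ (m + 1) - p ^ i) := by
  rw [Nat.card_congr (addAutEquivInjective _), natCard_injective_hom, natCard_torsionBy_cyclicProd,
    natCard_torsionBy_pow_succ_cyclicProd, natCard_torsionBy_pow_cyclicProd]

end Torsion

theorem statement10_general {ι Ω : Type*} (p n δ : ℕ) (hp : p.Prime) (hδ : 1 ≤ δ) (hδn : δ ≤ n)
    (hι : Nat.card ι = p ^ n) (hΩ : Nat.card Ω = p ^ n) :
    Nat.card {β : ι → Equiv.Perm Ω //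
      (∀ i j, i ≠ j → ∀ x, (β i * (β j)⁻¹) x ≠ x) ∧
      ∃ H : Subgroup (Equiv.Perm Ω),
        (H : Set (Equiv.Perm Ω)) = Set.range β ∧
        Nonempty (Additive H ≃+ ZMod (p ^ δ) × (Fin (n - δ) → ZMod p))} =
    Nat.factorial (p ^ n) * Nat.factorial (p ^ n - 1) /
      ((p ^ n - if δ = 1 then 1 else p ^ (n - 1)) *
        ∏ i ∈ Finset.Icc 1 (n - δ), (p ^ (n - δ + 1) - p ^ i)) := by
  have := Fact.mk hp
  obtain ⟨d, rfl⟩ := Nat.exists_eq_add_of_le' hδ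
  obtain ⟨m, rfl⟩ := Nat.exists_eq_add_of_le' hδn
  rw [Nat.add_sub_cancel]
  have hpos : 0 < Nat.card Ω := hΩ ▸ pow_pos hp.pos _
  have : Finite Ω := Nat.finite_of_card_ne_zero hpos.ne'
  have : Nonempty Ω := (Nat.card_pos_iff.mp hpos).1
  have hAut : Nat.card (AddAut (CyclicProd p d m)) =
      (p ^ (m + (d + 1)) - if d + 1 = 1 then 1 else p ^ (m + (d + 1) - 1)) *
        ∏ i ∈ Finset.Icc 1 m, (p ^ (m + 1) - p ^ i) := by
    rw [natCard_addAut_cyclicProd]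
    simp [add_assoc]
  have hcount := natCard_permGroupTuple_mul_natCard_addAut (hι.trans hΩ.symm)
    (natCard_cyclicProd.trans hΩ.symm)
  rw [hΩ] at hcount
  simp only [← hAut, ← isPermGroupTuple_multiplicative_iff]
  exact Nat.eq_div_of_mul_eq_left Nat.card_pos.ne' hcount

/-- Theorem 4.4: the number of permutation polynomial tuples `(β_0,…,β_{q−1})` whose entries
form a subgroup of `S_q` isomorphic to `Z_{p^δ} × Z_p^{n−δ}` (i.e. the number of permutation
group polynomials of the form constructed in Theorem 3.1) equals
`p^n! (p^n−1)! / ((p^n − p^{(δ−1)(n−δ+1)}) ∏_{i=1}^{n−δ} (p^{n−δ+1} − p^i))`. -/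
theorem statement10 (p n δ : ℕ) (hp : p.Prime) (hn : 2 ≤ n)
    (hδ : δ = 1 ∨ δ = 2) (hδn : δ ≤ n) :
    Nat.card {β : Fin (p ^ n) → Equiv.Perm (Fin (p ^ n)) //
      (∀ i j : Fin (p ^ n), i ≠ j → ∀ x : Fin (p ^ n), (β i * (β j)⁻¹) x ≠ x) ∧
      ∃ H : Subgroup (Equiv.Perm (Fin (p ^ n))),
        (H : Set (Equiv.Perm (Fin (p ^ n)))) = Set.range β ∧
        Nonempty (Additive H ≃+ ZMod (p ^ δ) × (Fin (n - δ) → ZMod p))} =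
    Nat.factorial (p ^ n) * Nat.factorial (p ^ n - 1) /
      ((p ^ n - p ^ ((δ - 1) * (n - δ + 1))) *
        ∏ i ∈ Finset.Icc 1 (n - δ), (p ^ (n - δ + 1) - p ^ i)) := by
  refine (statement10_general p n δ hp (by lia) hδn (Nat.card_fin _) (Nat.card_fin _)).trans ?_
  rcases hδ with rfl | rfl
  · simp
  · simp [show n - 2 + 1 = n - 1 by lia]
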